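/- (Soundness) Suppose the sequence r_1,…,r_M of constraints is (δ,γ)-far and let G be the instance graph built from it with parameter δ. There is a universal constant c (independent of the instance) such that: if p is a pricing and P is a shortest s–t path with respect to p whose revenue is R, then there exists an assignment f mapping each query to an answer such that at least R − M/2 − c/δ − γM of the constraints r_i are satisfied by f, i.e., π_i(f(q_1(r_i))) = f(q_2(r_i)). -/

import Mathlib

/-!
Let `P` be a shortest path. Comparing with the walk that uses only the edges `s_i → t_i`, every
part of `P` from `s_l` to `t_k` costs at most `k - l + 1`. Comparing with shortcuts, if `P` uses
the variable edges `u_i^a → v_i^a` and later `u_j^b → v_j^b` and there is a shortcut from `v_i^a`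
to `u_j^b` (the two answers conflict), the part of `P` in between costs at most `(j - i)/2`.

Walk along `P` gadget by gadget (`bound_of_suf`).
* A bypassed gadget brings no revenue.
* A stretch `s_i → u_i → v_i → u_j → ⋯ → v_k → t_k` using at least one shortcut has fixed cost
  `(k - i)/2`, hence revenue at most `(k - i)/2 + 1`.
* A gadget crossed by `s_i → u_i^a → v_i^a → t_i` has price at most `1`. If its constraint is not
  `δ`-far, its price is charged to the term `γM`. If it conflicts with some later gadget `j` on `P`,
  everything up to the first sink `t_k` after `u_j` has revenue at most `(k - i)/2 + 2`
  (`conflict_revenue`). If it conflicts with no later gadget, it is added to a set `T`, which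
  thus stays conflict-free.

Blocks of the second kind, and those skipped because of a conflict, are longer than `δM`, so there
are at most `1/δ` of them. Summing up, the revenue is at most `M/2 + |T| + γM + 2/δ`. As `T` is
conflict-free, some assignment satisfies all its constraints (`exists_assignment`), so `c = 2` works.
-/

open Classical

namespace StackSP

/-- The data from which the Stackelberg shortest-path instance graph is built:
a sequence of `M` constraints, where constraint `i` has first query `q1 i`, second
query `q2 i`, answer set `{a // valid1 i a}` (depending only on `q1 i`), answer set
`{b // valid2 i b}` for the second query (depending only on `q2 i`), and `ans i`
maps each answer `a` for the first query to its unique consistent answer for the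
second query. -/
structure Inst where
  M : ℕ
  Mpos : 0 < M
  Q1 : Type
  Q2 : Type
  A1 : Type
  A2 : Type
  q1 : Fin M → Q1
  q2 : Fin M → Q2
  valid1 : Fin M → A1 → Prop
  valid2 : Fin M → A2 → Prop
  ans : Fin M → A1 → A2
  valid1_congr : ∀ i j a, q1 i = q1 j → (valid1 i a ↔ valid1 j a)
  valid2_congr : ∀ i j b, q2 i = q2 j → (valid2 i b ↔ valid2 j b)
  ans_valid : ∀ i a, valid1 i a → valid2 i (ans i a)
  valid1_nonempty : ∀ i, ∃ a, valid1 i a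
  valid2_nonempty : ∀ i, ∃ b, valid2 i b

/-- Vertices of the instance graph: for each gadget `i`, a source `src i`, a sink
`snk i`, and intermediate vertices `u i a`, `v i a` for each answer `a`. -/
inductive Vtx (M : ℕ) (A1 : Type) where
  | src : Fin M → Vtx M A1
  | snk : Fin M → Vtx M A1
  | u : Fin M → A1 → Vtx M A1
  | v : Fin M → A1 → Vtx M A1

variable (I : Inst)

/-- Constraint `i` is `δ`-far: no constraint `j` with `i < j ≤ i + ⌈δM⌉` shares a query
with it. -/
def Far (δ : ℝ) (i : Fin I.M) : Prop :=
  ∀ j : Fin I.M, (i : ℕ) < (j : ℕ) → (j : ℕ) ≤ (i : ℕ) + ⌈δ * (I.M : ℝ)⌉₊ →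
    I.q1 i ≠ I.q1 j ∧ I.q2 i ≠ I.q2 j

/-- The variable (pricable) edges `u i a → v i a`. -/
def IsVarEdge : Vtx I.M I.A1 → Vtx I.M I.A1 → Prop
  | .u i a, .v j b => i = j ∧ a = b ∧ I.valid1 i a
  | _, _ => False

/-- The shortcut edges: `v i a → u j b` for `i < j` with both constraints `δ`-far and
either `q1 i = q1 j` with `a ≠ b`, or `q2 i = q2 j` with inconsistent second answers.
Such a shortcut has fixed cost `(j - i)/2`. -/
def IsShortcut (δ : ℝ) : Vtx I.M I.A1 → Vtx I.M I.A1 → Prop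
  | .v i a, .u j b =>
      (i : ℕ) < (j : ℕ) ∧ Far I δ i ∧ Far I δ j ∧ I.valid1 i a ∧ I.valid1 j b ∧
        ((I.q1 i = I.q1 j ∧ a ≠ b) ∨ (I.q2 i = I.q2 j ∧ I.ans i a ≠ I.ans j b))
  | _, _ => False

/-- The non-shortcut fixed cost edges: `src i → snk i` (cost 1), `src i → u i a` and
`v i a → snk i` (cost 0), and the chaining edges `snk i → src (i+1)` (cost 0). -/
def IsFixedBasic : Vtx I.M I.A1 → Vtx I.M I.A1 → Prop
  | .src i, .snk j => i = j
  | .src i, .u j a => i = j ∧ I.valid1 j a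
  | .v i a, .snk j => i = j ∧ I.valid1 i a
  | .snk i, .src j => (j : ℕ) = (i : ℕ) + 1
  | _, _ => False

/-- The edges of the instance graph `G` (with farness parameter `δ`). -/
def IsEdge (δ : ℝ) (x y : Vtx I.M I.A1) : Prop :=
  IsVarEdge I x y ∨ IsShortcut I δ x y ∨ IsFixedBasic I x y

/-- The cost of an edge under the pricing `p` of the variable edges: a variable edge
`u i a → v i a` costs `p i a`, a shortcut `v i a → u j b` costs `(j-i)/2`, the edge
`src i → snk i` costs `1`, and all other fixed edges cost `0`. -/
noncomputable def edgeCost (p : Fin I.M → I.A1 → ℝ) : Vtx I.M I.A1 → Vtx I.M I.A1 → ℝ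
  | .u i a, .v _ _ => p i a
  | .v i _, .u j _ => (((j : ℕ) : ℝ) - ((i : ℕ) : ℝ)) / 2
  | .src _, .snk _ => 1
  | _, _ => 0

/-- Total cost of a path (a list of vertices) under pricing `p`. -/
noncomputable def pathCost (p : Fin I.M → I.A1 → ℝ) (P : List (Vtx I.M I.A1)) : ℝ :=
  ((P.zip P.tail).map fun e => edgeCost I p e.1 e.2).sum

/-- The revenue of a path: the sum of the prices of the variable edges on it. -/
noncomputable def revenue (p : Fin I.M → I.A1 → ℝ) (P : List (Vtx I.M I.A1)) : ℝ :=
  ((P.zip P.tail).map fun e =>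
    match e with
    | (Vtx.u i a, Vtx.v _ _) => p i a
    | _ => 0).sum

/-- The total fixed cost of the fixed-cost edges on a path. -/
noncomputable def fixedCostSum (P : List (Vtx I.M I.A1)) : ℝ :=
  ((P.zip P.tail).map fun e =>
    match e with
    | (Vtx.src _, Vtx.snk _) => (1 : ℝ)
    | (Vtx.v i _, Vtx.u j _) => (((j : ℕ) : ℝ) - ((i : ℕ) : ℝ)) / 2
    | _ => 0).sum

/-- The total fixed cost of the shortcut edges on a path. -/
noncomputable def shortcutCostSum (δ : ℝ) (P : List (Vtx I.M I.A1)) : ℝ :=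
  ((P.zip P.tail).map fun e =>
    if IsShortcut I δ e.1 e.2 then edgeCost I (fun _ _ => 0) e.1 e.2 else 0).sum

/-- The global source `s = s_1`. -/
def srcV : Vtx I.M I.A1 := Vtx.src ⟨0, I.Mpos⟩

/-- The global sink `t = t_M`. -/
def snkV : Vtx I.M I.A1 := Vtx.snk ⟨I.M - 1, Nat.sub_lt I.Mpos Nat.one_pos⟩

/-- An `s`–`t` path in the instance graph. -/
def IsSTPath (δ : ℝ) (P : List (Vtx I.M I.A1)) : Prop :=
  P.Chain' (IsEdge I δ) ∧ P.head? = some (srcV I) ∧ P.getLast? = some (snkV I)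

/-- A shortest `s`–`t` path with respect to the pricing `p`. -/
def IsShortestSTPath (δ : ℝ) (p : Fin I.M → I.A1 → ℝ) (P : List (Vtx I.M I.A1)) : Prop :=
  IsSTPath I δ P ∧ ∀ Q, IsSTPath I δ Q → pathCost I p P ≤ pathCost I p Q

/-- A source-sink subpath of `P`: a (contiguous) subpath of `P` starting at some source
`src i` and ending at some sink `snk j` with `i ≤ j`. -/
def IsSSSubpath (Q P : List (Vtx I.M I.A1)) : Prop :=
  Q <:+: P ∧ ∃ i j : Fin I.M, (i : ℕ) ≤ (j : ℕ) ∧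
    Q.head? = some (Vtx.src i) ∧ Q.getLast? = some (Vtx.snk j)


section Soundness

variable {I : Inst} {δ : ℝ} {p : Fin I.M → I.A1 → ℝ}

/-! ### Edges of the instance graph -/

theorem edge_src {i : Fin I.M} {y : Vtx I.M I.A1} (h : IsEdge I δ (.src i) y) :
    y = .snk i ∨ ∃ a, y = .u i a ∧ I.valid1 i a := by
  cases y <;> simp_all [IsEdge, IsVarEdge, IsShortcut, IsFixedBasic]

theorem edge_snk {i : Fin I.M} {y : Vtx I.M I.A1} (h : IsEdge I δ (.snk i) y) :
    ∃ j : Fin I.M, y = .src j ∧ (j : ℕ) = i + 1 := by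
  cases y <;> simp_all [IsEdge, IsVarEdge, IsShortcut, IsFixedBasic]

theorem edge_u {i : Fin I.M} {a : I.A1} {y : Vtx I.M I.A1} (h : IsEdge I δ (.u i a) y) :
    y = .v i a := by
  cases y <;> simp_all [IsEdge, IsVarEdge, IsShortcut, IsFixedBasic]

theorem edge_v {i : Fin I.M} {a : I.A1} {y : Vtx I.M I.A1} (h : IsEdge I δ (.v i a) y) :
    y = .snk i ∨ ∃ j b, y = .u j b ∧ IsShortcut I δ (.v i a) (.u j b) := by
  cases y <;> simp_all [IsEdge, IsVarEdge, IsShortcut, IsFixedBasic]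

theorem edge_to_u {x : Vtx I.M I.A1} {j : Fin I.M} {b : I.A1} (h : IsEdge I δ x (.u j b)) :
    x = .src j ∨ ∃ i a, x = .v i a ∧ IsShortcut I δ (.v i a) (.u j b) := by
  cases x <;> simp_all [IsEdge, IsVarEdge, IsShortcut, IsFixedBasic]

theorem edge_to_v {x : Vtx I.M I.A1} {j : Fin I.M} {b : I.A1} (h : IsEdge I δ x (.v j b)) :
    x = .u j b := by
  cases x <;> simp_all [IsEdge, IsVarEdge, IsShortcut, IsFixedBasic]

theorem shortcut_lt {i j : Fin I.M} {a b : I.A1} (h : IsShortcut I δ (.v i a) (.u j b)) :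
    (i : ℕ) < j := h.1

/-- Since its tail constraint is `δ`-far, a shortcut spans more than `⌈δM⌉` gadgets. -/
theorem shortcut_long {i j : Fin I.M} {a b : I.A1} (h : IsShortcut I δ (.v i a) (.u j b)) :
    (i : ℕ) + ⌈δ * (I.M : ℝ)⌉₊ < j := by
  obtain ⟨hij, hi, -, -, -, hq⟩ := h
  by_contra hcon
  have := hi j hij (by omega)
  tauto

/-! ### Cost and revenue of walks -/

/-- The contribution of a single edge to the revenue. -/
noncomputable def edgeRev (p : Fin I.M → I.A1 → ℝ) : Vtx I.M I.A1 → Vtx I.M I.A1 → ℝ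
  | .u i a, .v _ _ => p i a
  | _, _ => 0

@[simp] theorem pathCost_singleton (x : Vtx I.M I.A1) : pathCost I p [x] = 0 := by
  simp [pathCost]

@[simp] theorem revenue_singleton (x : Vtx I.M I.A1) : revenue I p [x] = 0 := by
  simp [revenue]

theorem pathCost_cons (x y : Vtx I.M I.A1) (l : List (Vtx I.M I.A1)) :
    pathCost I p (x :: y :: l) = edgeCost I p x y + pathCost I p (y :: l) := by
  simp [pathCost]

theorem revenue_cons (x y : Vtx I.M I.A1) (l : List (Vtx I.M I.A1)) :
    revenue I p (x :: y :: l) = edgeRev p x y + revenue I p (y :: l) := by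
  simp only [revenue, List.tail_cons, List.zip_cons_cons, List.map_cons, List.sum_cons]
  cases x <;> cases y <;> rfl

theorem pathCost_split (X Y : List (Vtx I.M I.A1)) (z : Vtx I.M I.A1) :
    pathCost I p (X ++ z :: Y) = pathCost I p (X ++ [z]) + pathCost I p (z :: Y) := by
  induction X with
  | nil => simp
  | cons x X ih =>
    cases X with
    | nil => simp [pathCost_cons]
    | cons x' X => simp only [List.cons_append, pathCost_cons] at ih ⊢; linarith

theorem revenue_split (X Y : List (Vtx I.M I.A1)) (z : Vtx I.M I.A1) :
    revenue I p (X ++ z :: Y) = revenue I p (X ++ [z]) + revenue I p (z :: Y) := by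
  induction X with
  | nil => simp
  | cons x X ih =>
    cases X with
    | nil => simp [revenue_cons]
    | cons x' X => simp only [List.cons_append, revenue_cons] at ih ⊢; linarith

theorem edgeRev_le {x y : Vtx I.M I.A1} (h : IsEdge I δ x y) :
    edgeRev p x y ≤ edgeCost I p x y := by
  cases x <;> cases y <;> simp [edgeRev, edgeCost]
  rename_i i a j b
  have h' : (i : ℕ) < j := by
    rcases edge_v h with h | ⟨_, _, h, h'⟩
    · cases h
    · cases h; exact h'.1
  have : ((i : ℕ) : ℝ) < ((j : ℕ) : ℝ) := by exact_mod_cast h'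
  linarith

theorem revenue_le_pathCost {Q : List (Vtx I.M I.A1)} (h : Q.IsChain (IsEdge I δ)) :
    revenue I p Q ≤ pathCost I p Q := by
  induction Q with
  | nil => simp [revenue, pathCost]
  | cons x Q ih =>
    cases Q with
    | nil => simp
    | cons y Q =>
      rw [List.isChain_cons_cons] at h
      rw [revenue_cons, pathCost_cons]
      have := edgeRev_le (p := p) h.1
      have := ih h.2
      linarith

theorem revenue_nonneg (hp : ∀ i a, 0 ≤ p i a) (Q : List (Vtx I.M I.A1)) :
    0 ≤ revenue I p Q := by
  refine List.sum_nonneg fun x hx => ?_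
  obtain ⟨⟨y, z⟩, -, rfl⟩ := List.mem_map.1 hx
  cases y <;> cases z <;> simp [hp]

/-! ### Shortest walks -/

/-- `Q` is a walk that is shortest among all walks with the same endpoints. -/
def Short (δ : ℝ) (p : Fin I.M → I.A1 → ℝ) (Q : List (Vtx I.M I.A1)) : Prop :=
  Q.IsChain (IsEdge I δ) ∧ ∀ Q' : List (Vtx I.M I.A1), Q'.IsChain (IsEdge I δ) →
    Q'.head? = Q.head? → Q'.getLast? = Q.getLast? → pathCost I p Q ≤ pathCost I p Q'

theorem Short.final_part {X Y : List (Vtx I.M I.A1)} {z : Vtx I.M I.A1}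
    (h : Short δ p (X ++ z :: Y)) : Short δ p (z :: Y) := by
  obtain ⟨hc, hm⟩ := h
  have hc' := List.isChain_split.1 hc
  refine ⟨hc'.2, fun Q' hQ' hh hl => ?_⟩
  cases Q' with
  | nil => simp at hh
  | cons w Q' =>
    simp at hh
    subst hh
    have := hm (X ++ w :: Q') (List.isChain_split.2 ⟨hc'.1, hQ'⟩)
      (by cases X <;> simp) (by
        rw [List.getLast?_append_of_ne_nil _ (by simp), hl,
          List.getLast?_append_of_ne_nil _ (by simp)])
    rw [pathCost_split, pathCost_split X Q'] at this
    linarith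

theorem Short.initial_part {X Y : List (Vtx I.M I.A1)} {z : Vtx I.M I.A1}
    (h : Short δ p (X ++ z :: Y)) : Short δ p (X ++ [z]) := by
  obtain ⟨hc, hm⟩ := h
  have hc' := List.isChain_split.1 hc
  refine ⟨hc'.1, fun Q' hQ' hh hl => ?_⟩
  rcases List.eq_nil_or_concat' Q' with rfl | ⟨Q', w, rfl⟩
  · simp at hl
  · simp only [List.getLast?_append, List.getLast?_singleton, Option.some_or,
      Option.some.injEq] at hl
    subst hl
    have := hm (Q' ++ w :: Y) (List.isChain_split.2 ⟨hQ', hc'.2⟩)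
      (by cases X <;> cases Q' <;> simp_all) (by
        rw [List.getLast?_append_of_ne_nil _ (by simp),
          List.getLast?_append_of_ne_nil _ (by simp)])
    rw [pathCost_split, pathCost_split Q' Y] at this
    linarith

/-- The walk through the edges `s_i → t_i` of the gadgets `l, …, l + n`. -/
theorem exists_bypass (n : ℕ) : ∀ l k : Fin I.M, (k : ℕ) = l + n →
    ∃ Q : List (Vtx I.M I.A1), Q.IsChain (IsEdge I δ) ∧ Q.head? = some (.src l) ∧
      Q.getLast? = some (.snk k) ∧ pathCost I p Q = n + 1 := by
  induction n with
  | zero =>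
    intro l k h
    have : k = l := by ext; simpa using h
    subst this
    exact ⟨[.src k, .snk k], by simp [IsEdge, IsFixedBasic], by simp, by simp,
      by simp [pathCost_cons, edgeCost]⟩
  | succ n ih =>
    intro l k h
    have hl : (l : ℕ) + 1 < I.M := by have := k.2; omega
    obtain ⟨Q, hQ, hh, hlast, hcost⟩ := ih ⟨l + 1, hl⟩ k (by simp; omega)
    cases Q with
    | nil => simp at hh
    | cons w Q =>
      simp at hh
      subst hh
      refine ⟨.src l :: .snk l :: .src ⟨l + 1, hl⟩ :: Q, ?_, by simp, ?_, ?_⟩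
      · simp only [List.isChain_cons_cons]
        exact ⟨by simp [IsEdge, IsFixedBasic], by simp [IsEdge, IsFixedBasic], hQ⟩
      · simpa using hlast
      · simp [pathCost_cons, edgeCost] at hcost ⊢
        linarith

/-- A shortest walk from `s_l` to `t_k` costs at most the number of gadgets it spans. -/
theorem Short.cost_le {l k : Fin I.M} {Q : List (Vtx I.M I.A1)} (h : Short δ p Q)
    (hlk : (l : ℕ) ≤ k) (hh : Q.head? = some (.src l)) (hl : Q.getLast? = some (.snk k)) :
    pathCost I p Q ≤ (k : ℕ) - (l : ℕ) + 1 := by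
  obtain ⟨Q', hQ', hh', hl', hc⟩ :=
    exists_bypass (δ := δ) (p := p) ((k : ℕ) - l) l k (by omega)
  have := h.2 Q' hQ' (by rw [hh', hh]) (by rw [hl', hl])
  rw [hc] at this
  push_cast [Nat.cast_sub hlk] at this
  exact this

/-! ### Stretches of a walk that avoid sources and sinks -/

/-- A walk at `u_j^b` continues through variable edges and shortcuts only, until it reaches a
sink `t_k`; the fixed cost of this part is `(k - j)/2`, and `k = j` unless a shortcut is used. -/
theorem stretch_forward (n : ℕ) : ∀ (Q : List (Vtx I.M I.A1)) (j : Fin I.M) (b : I.A1),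
    Q.length ≤ n → (Vtx.u j b :: Q).IsChain (IsEdge I δ) →
    (Vtx.u j b :: Q).getLast? = some (snkV I) →
    ∃ (S : List (Vtx I.M I.A1)) (k : Fin I.M) (Y : List (Vtx I.M I.A1)),
      Q = S ++ Vtx.snk k :: Y ∧ (j : ℕ) ≤ k ∧
      (k = j ∧ S = [Vtx.v j b] ∨ (j : ℕ) + ⌈δ * (I.M : ℝ)⌉₊ < k) ∧
      pathCost I p (Vtx.u j b :: S ++ [Vtx.snk k]) =
        revenue I p (Vtx.u j b :: S ++ [Vtx.snk k]) + ((k : ℕ) - (j : ℕ) : ℝ) / 2 := by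
  induction n with
  | zero =>
    intro Q j b hn hc hl
    obtain rfl : Q = [] := by simpa using hn
    simp [snkV] at hl
  | succ n ih =>
    intro Q j b hn hc hl
    cases Q with
    | nil => simp [snkV] at hl
    | cons x Q =>
      rw [List.isChain_cons_cons] at hc
      obtain rfl := edge_u hc.1
      cases Q with
      | nil => simp [snkV] at hl
      | cons y Q =>
        have hc2 := hc.2
        rw [List.isChain_cons_cons] at hc2
        rcases edge_v hc2.1 with rfl | ⟨j', b', rfl, hs⟩
        · exact ⟨[.v j b], j, Q, by simp, le_rfl, Or.inl ⟨rfl, rfl⟩, by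
            simp [pathCost_cons, revenue_cons, edgeCost, edgeRev]⟩
        · obtain ⟨S, k, Y, rfl, hjk, -, hcost⟩ := ih Q j' b' (by simp at hn; omega) hc2.2
            (by simpa using hl)
          have := shortcut_long hs
          refine ⟨.v j b :: .u j' b' :: S, k, Y, by simp, by omega, Or.inr (by omega), ?_⟩
          simp [pathCost_cons, revenue_cons, edgeCost, edgeRev] at hcost ⊢
          linarith

/-- Going back from `u_j^b` along a walk that begins at a source, one meets variable edges and
shortcuts only, until a source `s_l`; the fixed cost of this part is `(j - l)/2`. -/
theorem stretch_backward (i : Fin I.M) (n : ℕ) :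
    ∀ (L : List (Vtx I.M I.A1)) (j : Fin I.M) (b : I.A1),
    L.length ≤ n → (L ++ [Vtx.u j b]).IsChain (IsEdge I δ) →
    (L ++ [Vtx.u j b]).head? = some (.src i) →
    ∃ (A : List (Vtx I.M I.A1)) (l : Fin I.M) (S : List (Vtx I.M I.A1)),
      L = A ++ Vtx.src l :: S ∧ (l : ℕ) ≤ j ∧
      pathCost I p (Vtx.src l :: S ++ [Vtx.u j b]) =
        revenue I p (Vtx.src l :: S ++ [Vtx.u j b]) + ((j : ℕ) - (l : ℕ) : ℝ) / 2 := by
  induction n with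
  | zero =>
    intro L j b hn hc hh
    obtain rfl : L = [] := by simpa using hn
    simp at hh
  | succ n ih =>
    intro L j b hn hc hh
    rcases List.eq_nil_or_concat' L with rfl | ⟨L, x, rfl⟩
    · simp at hh
    simp only [List.append_assoc, List.cons_append, List.nil_append] at hc hh ⊢
    rw [List.isChain_append_cons_cons] at hc
    rcases edge_to_u hc.2.1 with rfl | ⟨j', b', rfl, hs⟩
    · exact ⟨L, j, [], by simp, le_rfl, by
        simp [pathCost_cons, revenue_cons, edgeCost, edgeRev]⟩
    · rcases List.eq_nil_or_concat' L with rfl | ⟨L, x, rfl⟩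
      · simp at hh
      simp only [List.append_assoc, List.cons_append, List.nil_append] at hc hh ⊢
      have hc1 := hc.1
      rw [List.isChain_append_cons_cons] at hc1
      obtain rfl := edge_to_v hc1.2.1
      obtain ⟨A, l, S, rfl, hl, hcost⟩ := ih L j' b' (by simp at hn; omega) hc1.1
        (by cases L <;> simp_all)
      have := shortcut_lt hs
      refine ⟨A, l, S ++ [.u j' b', .v j' b'], by simp, by omega, ?_⟩
      have e : Vtx.src l :: (S ++ [Vtx.u j' b', Vtx.v j' b'] ++ [Vtx.u j b]) =
        (Vtx.src l :: S) ++ Vtx.u j' b' :: [Vtx.v j' b', Vtx.u j b] := by simp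
      rw [e, pathCost_split, revenue_split, hcost]
      simp [pathCost_cons, revenue_cons, edgeCost, edgeRev]
      ring

/-! ### Decomposition of a shortest path -/

/-- `Y` is a final part of a shortest `s`–`t` path, starting at the source of gadget `n`
(`0`-based); the empty list counts as starting at the nonexistent gadget `M`. -/
def Suf (δ : ℝ) (p : Fin I.M → I.A1 → ℝ) (Y : List (Vtx I.M I.A1)) (n : ℕ) : Prop :=
  (Y = [] ∧ n = I.M) ∨ ∃ h : n < I.M, Y.head? = some (.src ⟨n, h⟩) ∧ Short δ p Y ∧
    Y.getLast? = some (snkV I)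

theorem Suf.next {X Y : List (Vtx I.M I.A1)} {k : Fin I.M}
    (hs : Short δ p (X ++ Vtx.snk k :: Y))
    (hl : (X ++ Vtx.snk k :: Y).getLast? = some (snkV I)) :
    Suf δ p Y (k + 1) ∧
      revenue I p (X ++ Vtx.snk k :: Y) =
        revenue I p (X ++ [Vtx.snk k]) + revenue I p Y := by
  cases Y with
  | nil =>
    simp [snkV] at hl
    have := I.Mpos
    exact ⟨Or.inl ⟨rfl, by rw [hl]; simp; omega⟩, by simp [revenue]⟩
  | cons y Y =>
    have h2 := hs.final_part
    have hc := h2.1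
    rw [List.isChain_cons_cons] at hc
    obtain ⟨j, rfl, hj⟩ := edge_snk hc.1
    constructor
    · right
      refine ⟨by have := j.2; omega, by simp [Fin.ext_iff, hj], ?_, ?_⟩
      · exact Short.final_part (X := [Vtx.snk k]) h2
      · rw [List.getLast?_append_of_ne_nil _ (by simp)] at hl
        simpa using hl
    · rw [revenue_split, revenue_cons]
      simp [edgeRev]

/-- The constraints of `T` with answers `g` lie on `Y`, are `δ`-far, have index at least `n`,
and no two of them are joined by a shortcut. -/
def Good (δ : ℝ) (Y : List (Vtx I.M I.A1)) (n : ℕ) (T : Finset (Fin I.M))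
    (g : Fin I.M → I.A1) : Prop :=
  (∀ j ∈ T, Vtx.u j (g j) ∈ Y ∧ Far I δ j ∧ I.valid1 j (g j) ∧ n ≤ (j : ℕ)) ∧
    ∀ j ∈ T, ∀ k ∈ T, ¬ IsShortcut I δ (.v j (g j)) (.u k (g k))

/-- The constraints of index at least `n` that are not `δ`-far. -/
noncomputable def nonFar (I : Inst) (δ : ℝ) (n : ℕ) : Finset (Fin I.M) :=
  Finset.univ.filter fun j => n ≤ (j : ℕ) ∧ ¬ Far I δ j

theorem nonFar_anti {m n : ℕ} (h : m ≤ n) :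
    ((nonFar I δ n).card : ℝ) ≤ (nonFar I δ m).card := by
  refine Nat.cast_le.2 (Finset.card_le_card fun j hj => ?_)
  simp only [nonFar, Finset.mem_filter, Finset.mem_univ, true_and] at hj ⊢
  exact ⟨by omega, hj.2⟩

theorem nonFar_succ {i : Fin I.M} (h : ¬ Far I δ i) :
    ((nonFar I δ (i + 1)).card : ℝ) + 1 ≤ (nonFar I δ i).card := by
  have hn : i ∉ nonFar I δ (i + 1) := by simp [nonFar]
  have : insert i (nonFar I δ (i + 1)) ⊆ nonFar I δ i := by
    intro j hj
    simp only [nonFar, Finset.mem_insert, Finset.mem_filter, Finset.mem_univ, true_and] at hj ⊢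
    rcases hj with rfl | hj
    · exact ⟨le_rfl, h⟩
    · exact ⟨by omega, hj.2⟩
  have := Finset.card_le_card this
  rw [Finset.card_insert_of_notMem hn] at this
  exact_mod_cast this

/-- The bound proved by induction along the path: the revenue of the final part `Y`, in terms of
the number of remaining gadgets, a conflict-free set `T` and the number of constraints that are
not `δ`-far. -/
def Bound (δ : ℝ) (p : Fin I.M → I.A1 → ℝ) (Y : List (Vtx I.M I.A1)) (n : ℕ) : Prop :=
  ∃ T g, Good δ Y n T g ∧
    revenue I p Y ≤ ((I.M : ℝ) - n) / 2 + T.card + (nonFar I δ n).card +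
      2 * (((I.M : ℝ) - n) / (δ * I.M))

/-- If the gadgets `n, …, k` have length more than `δM` and bring revenue at most
`(k - n)/2 + 2`, they can be skipped. -/
theorem Bound.skip {X Y : List (Vtx I.M I.A1)} {n : ℕ} {k : Fin I.M} (hδ : 0 < δ)
    (h : Bound δ p Y (k + 1)) (hnk : n + ⌈δ * (I.M : ℝ)⌉₊ < k)
    (hrev : revenue I p (X ++ Vtx.snk k :: Y) =
      revenue I p (X ++ [Vtx.snk k]) + revenue I p Y)
    (hX : revenue I p (X ++ [Vtx.snk k]) ≤ ((k : ℕ) - n : ℝ) / 2 + 2) :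
    Bound δ p (X ++ Vtx.snk k :: Y) n := by
  obtain ⟨T, g, ⟨hT, hT'⟩, hb⟩ := h
  refine ⟨T, g, ⟨fun j hj => ?_, hT'⟩, ?_⟩
  · obtain ⟨h1, h2, h3, h4⟩ := hT j hj
    exact ⟨by simp [h1], h2, h3, by omega⟩
  · have hM : (0 : ℝ) < I.M := by exact_mod_cast I.Mpos
    have hpos : 0 < δ * I.M := by positivity
    have hlen : δ * I.M ≤ (k : ℕ) - n := by
      have h1 := Nat.le_ceil (δ * (I.M : ℝ))
      have h2 : ((n + ⌈δ * (I.M : ℝ)⌉₊ : ℕ) : ℝ) < ((k : ℕ) : ℝ) := by exact_mod_cast hnk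
      push_cast at h2
      linarith
    have hq : ((I.M : ℝ) - (k + 1 : ℕ)) / (δ * I.M) + 1 ≤ ((I.M : ℝ) - n) / (δ * I.M) := by
      rw [div_add_one hpos.ne']
      gcongr
      push_cast
      linarith
    have := nonFar_anti (I := I) (δ := δ) (m := n) (n := k + 1) (by omega)
    push_cast at hb hq
    rw [hrev]
    linarith

/-- A single gadget bringing no revenue, or revenue at most `1` at a constraint that is
not `δ`-far, can be skipped. -/
theorem Bound.skip_one {X Y : List (Vtx I.M I.A1)} {i : Fin I.M} (hδ : 0 < δ)
    (h : Bound δ p Y (i + 1))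
    (hrev : revenue I p (X ++ Vtx.snk i :: Y) =
      revenue I p (X ++ [Vtx.snk i]) + revenue I p Y)
    (hX : revenue I p (X ++ [Vtx.snk i]) ≤ 0 ∨
      ¬ Far I δ i ∧ revenue I p (X ++ [Vtx.snk i]) ≤ 1) :
    Bound δ p (X ++ Vtx.snk i :: Y) i := by
  obtain ⟨T, g, ⟨hT, hT'⟩, hb⟩ := h
  refine ⟨T, g, ⟨fun j hj => ?_, hT'⟩, ?_⟩
  · obtain ⟨h1, h2, h3, h4⟩ := hT j hj
    exact ⟨by simp [h1], h2, h3, by omega⟩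
  · have hM : (0 : ℝ) < I.M := by exact_mod_cast I.Mpos
    have hpos : 0 < δ * I.M := by positivity
    have hq : ((I.M : ℝ) - (i + 1 : ℕ)) / (δ * I.M) ≤ ((I.M : ℝ) - (i : ℕ)) / (δ * I.M) := by
      gcongr; simp
    push_cast at hb hq
    rw [hrev]
    rcases hX with hX | ⟨hf, hX⟩
    · have := nonFar_anti (I := I) (δ := δ) (m := i) (n := i + 1) (by omega)
      linarith
    · have := nonFar_succ hf
      linarith

/-- A gadget whose price on the path is at most `1`, and which conflicts with nothing later on
the path, can be added to the conflict-free set. -/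
theorem Bound.add {X Y : List (Vtx I.M I.A1)} {i : Fin I.M} {a : I.A1} (hδ : 0 < δ)
    (h : Bound δ p Y (i + 1))
    (hrev : revenue I p (X ++ Vtx.snk i :: Y) =
      revenue I p (X ++ [Vtx.snk i]) + revenue I p Y)
    (hX : revenue I p (X ++ [Vtx.snk i]) ≤ 1) (ha : Vtx.u i a ∈ X) (hf : Far I δ i)
    (hv : I.valid1 i a)
    (hno : ¬ ∃ j b, Vtx.u j b ∈ Y ∧ IsShortcut I δ (.v i a) (.u j b)) :
    Bound δ p (X ++ Vtx.snk i :: Y) i := by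
  obtain ⟨T, g, ⟨hT, hT'⟩, hb⟩ := h
  have hne : ∀ j ∈ T, j ≠ i := by
    rintro j hj rfl
    have := (hT j hj).2.2.2
    omega
  refine ⟨insert i T, Function.update g i a, ⟨fun j hj => ?_, fun j hj k hk => ?_⟩, ?_⟩
  · rcases Finset.mem_insert.1 hj with rfl | hj
    · simp [ha, hf, hv]
    · obtain ⟨h1, h2, h3, h4⟩ := hT j hj
      rw [Function.update_of_ne (hne j hj)]
      exact ⟨by simp [h1], h2, h3, by omega⟩
  · rcases Finset.mem_insert.1 hj with rfl | hj <;> rcases Finset.mem_insert.1 hk with rfl | hk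
    · intro hs
      exact (lt_irrefl _ (shortcut_lt hs)).elim
    · rw [Function.update_of_ne (hne k hk), Function.update_self]
      exact fun hs => hno ⟨k, g k, (hT k hk).1, hs⟩
    · intro hs
      have h1 := shortcut_lt hs
      have h2 := (hT j ‹j ∈ T›).2.2.2
      omega
    · rw [Function.update_of_ne (hne k hk), Function.update_of_ne (hne j hj)]
      exact hT' j hj k hk
  · have hM : (0 : ℝ) < I.M := by exact_mod_cast I.Mpos
    have hpos : 0 < δ * I.M := by positivity
    have hq : ((I.M : ℝ) - (i + 1 : ℕ)) / (δ * I.M) ≤ ((I.M : ℝ) - (i : ℕ)) / (δ * I.M) := by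
      gcongr; simp
    have := nonFar_anti (I := I) (δ := δ) (m := i) (n := i + 1) (by omega)
    rw [Finset.card_insert_of_notMem (fun hi => hne i hi rfl)]
    push_cast at hb hq ⊢
    rw [hrev]
    linarith

/-- If the path passes through `u_i^a → v_i^a → t_i` and later through a vertex `u_j^b` to which
`v_i^a` has a shortcut, then the part of the path from `s_i` to the first sink `t_k` after `u_j^b`
has revenue at most `(k - i)/2 + 2`. Here `s_l` is the last source before `u_j^b`: the shortcut
bounds the revenue between `v_i^a` and `s_l` by `(l - i)/2`, and the walk bypassing all variable
edges bounds the revenue between `s_l` and `t_k` by `(k - l)/2 + 1`. -/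
theorem conflict_revenue (hp0 : ∀ i a, 0 ≤ p i a) {Y : List (Vtx I.M I.A1)} {i j : Fin I.M} {a b : I.A1}
    (hs : Short δ p (Vtx.src i :: Vtx.u i a :: Vtx.v i a :: Vtx.snk i :: Y))
    (hl : (Vtx.src i :: Vtx.u i a :: Vtx.v i a :: Vtx.snk i :: Y).getLast? = some (snkV I))
    (hY : Vtx.u j b ∈ Y) (hcut : IsShortcut I δ (.v i a) (.u j b)) (hp : p i a ≤ 1) :
    ∃ X k Y', Y = X ++ Vtx.snk k :: Y' ∧ (j : ℕ) ≤ k ∧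
      revenue I p (Vtx.src i :: Vtx.u i a :: Vtx.v i a :: Vtx.snk i :: X ++ [Vtx.snk k]) ≤
        ((k : ℕ) - (i : ℕ) : ℝ) / 2 + 2 := by
  obtain ⟨Y1, Y2, rfl⟩ := List.append_of_mem hY
  have hs1 : Short δ p (Vtx.snk i :: (Y1 ++ Vtx.u j b :: Y2)) :=
    Short.final_part (X := [.src i, .u i a, .v i a]) (by simpa using hs)
  have hsu : Short δ p (Vtx.u j b :: Y2) :=
    Short.final_part (X := .snk i :: Y1) (by simpa using hs1)
  have hlu : (Vtx.u j b :: Y2).getLast? = some (snkV I) := by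
    have e : (Vtx.src i :: Vtx.u i a :: Vtx.v i a :: Vtx.snk i :: (Y1 ++ Vtx.u j b :: Y2)) =
      (Vtx.src i :: Vtx.u i a :: Vtx.v i a :: Vtx.snk i :: Y1) ++ Vtx.u j b :: Y2 := by simp
    rw [e, List.getLast?_append_of_ne_nil _ (by simp)] at hl
    exact hl
  obtain ⟨S', k, Y', rfl, hjk, -, hcost'⟩ :=
    stretch_forward (p := p) _ Y2 j b le_rfl hsu.1 hlu
  have hback : ∃ (A : List (Vtx I.M I.A1)) (l : Fin I.M) (S : List (Vtx I.M I.A1)),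
      Y1 = A ++ Vtx.src l :: S ∧ (l : ℕ) ≤ j ∧
      pathCost I p (Vtx.src l :: S ++ [Vtx.u j b]) =
        revenue I p (Vtx.src l :: S ++ [Vtx.u j b]) + ((j : ℕ) - (l : ℕ) : ℝ) / 2 := by
    have hc := Short.initial_part (X := .snk i :: Y1) (by simpa using hs1)
    have hc' := hc.1
    cases Y1 with
    | nil =>
      simp only [List.cons_append, List.nil_append, List.isChain_cons_cons] at hc'
      obtain ⟨_, h, -⟩ := edge_snk hc'.1
      cases h
    | cons y Y1 =>
      simp only [List.cons_append, List.isChain_cons_cons] at hc'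
      obtain ⟨m, rfl, -⟩ := edge_snk hc'.1
      exact stretch_backward m _ (.src m :: Y1) j b le_rfl hc'.2 (by simp)
  obtain ⟨A, l, S, rfl, hlj, hcost⟩ := hback
  refine ⟨A ++ Vtx.src l :: S ++ Vtx.u j b :: S', k, Y', by simp, hjk, ?_⟩
  have h1 : Short δ p ((Vtx.v i a :: Vtx.snk i :: A) ++ Vtx.src l :: S ++ [Vtx.u j b]) := by
    apply Short.initial_part (Y := S' ++ Vtx.snk k :: Y')
    refine Short.final_part (X := [.src i, .u i a]) ?_
    simpa using hs
  have h2 : Short δ p (Vtx.src l :: S ++ Vtx.u j b :: S' ++ [Vtx.snk k]) := by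
    apply Short.initial_part (Y := Y')
    refine Short.final_part (X := [.src i, .u i a, .v i a, .snk i] ++ A) ?_
    simpa using hs
  have hc1 := h1.2 [.v i a, .u j b] (by simp [IsEdge, hcut]) (by simp)
    (by rw [List.getLast?_append_of_ne_nil _ (by simp)]; simp)
  have hc2 := h2.cost_le (l := l) (k := k) (by omega) (by simp)
    (by rw [List.getLast?_append_of_ne_nil _ (by simp)]; simp)
  have hc3 := revenue_le_pathCost (p := p)
    (Short.initial_part (X := Vtx.v i a :: Vtx.snk i :: A) (z := .src l) (Y := S ++ [Vtx.u j b])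
      (by simpa using h1)).1
  have e1 : (Vtx.v i a :: Vtx.snk i :: A) ++ Vtx.src l :: S ++ [Vtx.u j b] =
    (Vtx.v i a :: Vtx.snk i :: A) ++ Vtx.src l :: (S ++ [Vtx.u j b]) := by simp
  have e2 : Vtx.src l :: S ++ Vtx.u j b :: S' ++ [Vtx.snk k] =
    (Vtx.src l :: S) ++ Vtx.u j b :: (S' ++ [Vtx.snk k]) := by simp
  have e3 : Vtx.src i :: Vtx.u i a :: Vtx.v i a :: Vtx.snk i ::
      (A ++ Vtx.src l :: S ++ Vtx.u j b :: S') ++ [Vtx.snk k] =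
    Vtx.src i :: Vtx.u i a :: Vtx.v i a :: ((Vtx.snk i :: A) ++ Vtx.src l ::
      (S ++ Vtx.u j b :: (S' ++ [Vtx.snk k]))) := by simp
  have e4 : Vtx.v i a :: ((Vtx.snk i :: A) ++ Vtx.src l ::
      (S ++ Vtx.u j b :: (S' ++ [Vtx.snk k]))) = (Vtx.v i a :: Vtx.snk i :: A) ++ Vtx.src l ::
      (S ++ Vtx.u j b :: (S' ++ [Vtx.snk k])) := by simp
  have e5 : Vtx.src l :: (S ++ Vtx.u j b :: (S' ++ [Vtx.snk k])) =
    (Vtx.src l :: S) ++ Vtx.u j b :: (S' ++ [Vtx.snk k]) := by simp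
  rw [e1, pathCost_split] at hc1
  rw [e2, pathCost_split] at hc2
  rw [e3, revenue_cons, revenue_cons, e4, revenue_split, e5,
    revenue_split (Vtx.src l :: S) (S' ++ [Vtx.snk k])]
  simp only [List.cons_append] at hcost hcost' hc1 hc2 hc3 ⊢
  have hr0 := revenue_nonneg hp0 (Vtx.src l :: (S ++ [Vtx.u j b]))
  simp only [pathCost_cons (Vtx.v i a) (Vtx.u j b), pathCost_singleton, edgeCost] at hc1
  simp only [edgeRev]
  linarith

/-- Induction along the path. A gadget is bypassed; or begins a stretch with a shortcut, which is
skipped; or is crossed by `s_i → u_i^a → v_i^a → t_i`. In the last case it is skipped when it is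
not `δ`-far, skipped together with everything up to a later conflicting gadget if there is one,
and otherwise put into the conflict-free set. -/
theorem bound_of_suf (hδ : 0 < δ) (hp : ∀ i a, 0 ≤ p i a) (N : ℕ) :
    ∀ (Q : List (Vtx I.M I.A1)) (n : ℕ), Q.length ≤ N → Suf δ p Q n → Bound δ p Q n := by
  induction N with
  | zero =>
    intro Q n hN h
    obtain rfl : Q = [] := by simpa using hN
    rcases h with ⟨-, rfl⟩ | ⟨_, h, _⟩
    · exact ⟨∅, fun _ => (I.valid1_nonempty ⟨0, I.Mpos⟩).choose, by simp [Good],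
        by simp [revenue]⟩
    · simp at h
  | succ N ih =>
    intro Q n hN h
    rcases h with ⟨rfl, rfl⟩ | ⟨hn, hh, hs, hl⟩
    · exact ih [] _ (by simp) (Or.inl ⟨rfl, rfl⟩)
    set i : Fin I.M := ⟨n, hn⟩ with hi
    have hni : n = (i : ℕ) := rfl
    clear_value i
    subst hni
    rcases Q with _ | ⟨x, _ | ⟨y, Q⟩⟩
    · simp at hh
    · simp at hh
      subst hh
      simp [snkV] at hl
    obtain rfl : x = .src i := by simpa using hh
    rcases edge_src (List.isChain_cons_cons.1 hs.1).1 with rfl | ⟨a, rfl, ha⟩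
    · obtain ⟨h1, h2⟩ := Suf.next (X := [.src i]) hs hl
      exact Bound.skip_one (X := [.src i]) hδ (ih Q _ (by simp at hN; omega) h1) h2
        (Or.inl (by simp [revenue_cons, edgeRev]))
    · obtain ⟨S, k, Y, rfl, hik, hk, hcost⟩ := stretch_forward (p := p) _ Q i a le_rfl
        (List.isChain_cons_cons.1 hs.1).2 (by simpa using hl)
      obtain ⟨h1, h2⟩ := Suf.next (X := .src i :: .u i a :: S) hs hl
      have hIH := ih Y _ (by simp at hN; omega) h1
      have hs1 : Short δ p (Vtx.src i :: Vtx.u i a :: S ++ [Vtx.snk k]) :=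
        Short.initial_part (X := .src i :: .u i a :: S) hs
      have hrev : revenue I p (Vtx.src i :: Vtx.u i a :: S ++ [Vtx.snk k]) ≤
          ((k : ℕ) - (i : ℕ) : ℝ) / 2 + 1 := by
        have hc := hs1.cost_le (l := i) (k := k) hik (by simp)
          (by rw [List.getLast?_append_of_ne_nil _ (by simp)]; simp)
        simp only [List.cons_append, pathCost_cons, revenue_cons, edgeCost, edgeRev]
          at hc hcost ⊢
        linarith
      rcases hk with ⟨rfl, rfl⟩ | hk
      · have hrev1 : revenue I p ([Vtx.src k, Vtx.u k a, Vtx.v k a] ++ [Vtx.snk k]) ≤ 1 := by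
          simpa using hrev
        by_cases hf : Far I δ k
        · by_cases hcon : ∃ j b, Vtx.u j b ∈ Y ∧ IsShortcut I δ (.v k a) (.u j b)
          · obtain ⟨j, b, hjY, hcut⟩ := hcon
            obtain ⟨X, k', Y', rfl, hjk, hr⟩ := conflict_revenue hp hs hl hjY hcut
              (by simpa [revenue_cons, edgeRev] using hrev1)
            have e : Vtx.src k :: Vtx.u k a :: ([Vtx.v k a] ++ Vtx.snk k ::
                (X ++ Vtx.snk k' :: Y')) =
              (.src k :: .u k a :: .v k a :: .snk k :: X) ++ Vtx.snk k' :: Y' := by simp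
            rw [e] at hs hl ⊢
            obtain ⟨h3, h4⟩ := Suf.next hs hl
            have := shortcut_long hcut
            exact Bound.skip hδ (ih Y' _ (by simp at hN; omega) h3) (by omega) h4 hr
          · exact Bound.add (X := [.src k, .u k a, .v k a]) hδ hIH h2 hrev1 (by simp) hf ha hcon
        · exact Bound.skip_one (X := [.src k, .u k a, .v k a]) hδ hIH h2 (Or.inr ⟨hf, hrev1⟩)
      · exact Bound.skip (X := .src i :: .u i a :: S) hδ hIH hk h2 (by linarith)

/-! ### The assignment -/

/-- A conflict-free set of far constraints with their answers extends to an assignment that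
satisfies all of them. -/
theorem exists_assignment {Y : List (Vtx I.M I.A1)} {n : ℕ} {T : Finset (Fin I.M)}
    {g : Fin I.M → I.A1} (h : Good δ Y n T g) :
    ∃ (f1 : I.Q1 → I.A1) (f2 : I.Q2 → I.A2),
      (∀ i, I.valid1 i (f1 (I.q1 i))) ∧ (∀ i, I.valid2 i (f2 (I.q2 i))) ∧
      ∀ i ∈ T, I.ans i (f1 (I.q1 i)) = f2 (I.q2 i) := by
  obtain ⟨hT, hcf⟩ := h
  have hnc : ∀ j ∈ T, ∀ k ∈ T, (I.q1 j = I.q1 k → g j = g k) ∧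
      (I.q2 j = I.q2 k → I.ans j (g j) = I.ans k (g k)) := by
    have key : ∀ j ∈ T, ∀ k ∈ T, (j : ℕ) < k → (I.q1 j = I.q1 k → g j = g k) ∧
        (I.q2 j = I.q2 k → I.ans j (g j) = I.ans k (g k)) := by
      intro j hj k hk hlt
      have h0 := hcf j hj k hk
      obtain ⟨-, hj1, hj2, -⟩ := hT j hj
      obtain ⟨-, hk1, hk2, -⟩ := hT k hk
      constructor
      · intro hq
        by_contra hne
        exact h0 ⟨hlt, hj1, hk1, hj2, hk2, Or.inl ⟨hq, hne⟩⟩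
      · intro hq
        by_contra hne
        exact h0 ⟨hlt, hj1, hk1, hj2, hk2, Or.inr ⟨hq, hne⟩⟩
    intro j hj k hk
    rcases lt_trichotomy (j : ℕ) k with hlt | heq | hlt
    · exact key j hj k hk hlt
    · have : j = k := Fin.ext heq
      subst this
      exact ⟨fun _ => rfl, fun _ => rfl⟩
    · have := key k hk j hj hlt
      exact ⟨fun hq => (this.1 hq.symm).symm, fun hq => (this.2 hq.symm).symm⟩
  have h1 : ∀ q : I.Q1, ∃ a, (∀ i, I.q1 i = q → I.valid1 i a) ∧
      ∀ j ∈ T, I.q1 j = q → a = g j := by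
    intro q
    by_cases hq : ∃ j ∈ T, I.q1 j = q
    · obtain ⟨j, hj, rfl⟩ := hq
      exact ⟨g j, fun i hi => (I.valid1_congr i j _ hi).2 (hT j hj).2.2.1,
        fun k hk hkq => (hnc j hj k hk).1 hkq.symm⟩
    · by_cases hq' : ∃ i, I.q1 i = q
      · obtain ⟨i, rfl⟩ := hq'
        obtain ⟨a, ha⟩ := I.valid1_nonempty i
        exact ⟨a, fun k hk => (I.valid1_congr k i _ hk).2 ha,
          fun j hj hjq => (hq ⟨j, hj, hjq⟩).elim⟩
      · exact ⟨g ⟨0, I.Mpos⟩, fun i hi => (hq' ⟨i, hi⟩).elim,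
          fun j hj hjq => (hq ⟨j, hj, hjq⟩).elim⟩
  have h2 : ∀ q : I.Q2, ∃ b, (∀ i, I.q2 i = q → I.valid2 i b) ∧
      ∀ j ∈ T, I.q2 j = q → b = I.ans j (g j) := by
    intro q
    by_cases hq : ∃ j ∈ T, I.q2 j = q
    · obtain ⟨j, hj, rfl⟩ := hq
      exact ⟨I.ans j (g j),
        fun i hi => (I.valid2_congr i j _ hi).2 (I.ans_valid j _ (hT j hj).2.2.1),
        fun k hk hkq => (hnc j hj k hk).2 hkq.symm⟩
    · by_cases hq' : ∃ i, I.q2 i = q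
      · obtain ⟨i, rfl⟩ := hq'
        obtain ⟨b, hb⟩ := I.valid2_nonempty i
        exact ⟨b, fun k hk => (I.valid2_congr k i _ hk).2 hb,
          fun j hj hjq => (hq ⟨j, hj, hjq⟩).elim⟩
      · exact ⟨I.ans ⟨0, I.Mpos⟩ (g ⟨0, I.Mpos⟩), fun i hi => (hq' ⟨i, hi⟩).elim,
          fun j hj hjq => (hq ⟨j, hj, hjq⟩).elim⟩
  choose f1 hf1 using h1
  choose f2 hf2 using h2
  refine ⟨f1, f2, fun i => (hf1 _).1 i rfl, fun i => (hf2 _).1 i rfl, fun i hi => ?_⟩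
  rw [(hf1 _).2 i hi rfl, (hf2 _).2 i hi rfl]

end Soundness

/-- Soundness: there is a universal constant `c` such that for every `(δ,γ)`-far
constraint sequence and its instance graph, every pricing `p`, and every shortest
`s`–`t` path `P` with revenue `R`, there is an assignment `(f1, f2)` of answers to
queries satisfying at least `R - M/2 - c/δ - γM` of the `M` constraints. -/
theorem soundness :
    ∃ c : ℝ, ∀ (I : Inst) (δ γ : ℝ), 0 < δ →
      -- the sequence is `(δ,γ)`-far: at least `(1-γ)·M` constraints are `δ`-far
      (1 - γ) * (I.M : ℝ) ≤ (Nat.card {i : Fin I.M // Far I δ i} : ℝ) →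
      ∀ p : Fin I.M → I.A1 → ℝ, (∀ i a, 0 ≤ p i a) →
      ∀ P : List (Vtx I.M I.A1), IsShortestSTPath I δ p P →
      ∃ (f1 : I.Q1 → I.A1) (f2 : I.Q2 → I.A2),
        (∀ i, I.valid1 i (f1 (I.q1 i))) ∧ (∀ i, I.valid2 i (f2 (I.q2 i))) ∧
        revenue I p P - (I.M : ℝ) / 2 - c / δ - γ * (I.M : ℝ) ≤
          (Nat.card {i : Fin I.M // I.ans i (f1 (I.q1 i)) = f2 (I.q2 i)} : ℝ) := by
  refine ⟨2, fun I δ γ hδ hfar p hp P hP => ?_⟩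
  obtain ⟨⟨hc, hh, hl⟩, hmin⟩ := hP
  have hsuf : Suf δ p P 0 := by
    refine Or.inr ⟨I.Mpos, hh, ⟨hc, fun Q hQ hQh hQl => ?_⟩, hl⟩
    exact hmin Q ⟨hQ, hQh.trans hh, hQl.trans hl⟩
  obtain ⟨T, g, hgood, hrev⟩ := bound_of_suf hδ hp _ P 0 le_rfl hsuf
  obtain ⟨f1, f2, hv1, hv2, hsat⟩ := exists_assignment hgood
  refine ⟨f1, f2, hv1, hv2, ?_⟩
  have hM : (0 : ℝ) < I.M := by exact_mod_cast I.Mpos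
  have hT : (T.card : ℝ) ≤
      (Nat.card {i : Fin I.M // I.ans i (f1 (I.q1 i)) = f2 (I.q2 i)} : ℝ) := by
    rw [Nat.card_eq_fintype_card, Fintype.card_subtype]
    refine Nat.cast_le.2 (Finset.card_le_card fun i hi => ?_)
    simpa using hsat i hi
  have hN : ((nonFar I δ 0).card : ℝ) ≤ γ * I.M := by
    have h1 : (Nat.card {i : Fin I.M // Far I δ i}) + (nonFar I δ 0).card = I.M := by
      rw [Nat.card_eq_fintype_card, Fintype.card_subtype]
      have := Finset.card_filter_add_card_filter_not (s := (Finset.univ : Finset (Fin I.M)))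
        (fun i => Far I δ i)
      simpa [nonFar] using this
    have h2 : (Nat.card {i : Fin I.M // Far I δ i} : ℝ) + (nonFar I δ 0).card = I.M := by
      exact_mod_cast h1
    linarith
  have hd : ((I.M : ℝ) - (0 : ℕ)) / (δ * I.M) = 1 / δ := by
    field_simp
    simp
  rw [hd] at hrev
  have : (2 : ℝ) / δ = 2 * (1 / δ) := by ring
  rw [this]
  push_cast at hrev
  linarith

end StackSP
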